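/- arXiv:2311.06161 — 9 statements merged into one kernel-verified Lean document; each statement's English description precedes it below -/
import Mathlib

section
/- In a finite simple graph G, every minimal dominating set of G is a maximal irredundant set of G. -/
/-!  Common definitions: irredundance, irredundance coloring,
irredundance compelling coloring, and related graph parameters. -/

variable {V : Type*}

/-- The closed neighborhood `N[v]` of a vertex `v`. -/
def closedNbr (G : SimpleGraph V) (v : V) : Set V := insert v (G.neighborSet v)

/-- The private neighbor set `pn[v,S] = N[v] − N[S − {v}]`. -/
def pnSet (G : SimpleGraph V) (S : Set V) (v : V) : Set V :=
  closedNbr G v \ ⋃ w ∈ S \ {v}, closedNbr G w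

/-- A set `S` is irredundant if every vertex of `S` has a private neighbor. -/
def IsIrredundant (G : SimpleGraph V) (S : Set V) : Prop :=
  ∀ v ∈ S, (pnSet G S v).Nonempty

/-- A maximal irredundant set: irredundant, and adding any outside vertex
destroys irredundance. -/
def IsMaxIrredundant (G : SimpleGraph V) (S : Set V) : Prop :=
  IsIrredundant G S ∧ ∀ w ∉ S, ¬ IsIrredundant G (insert w S)

/-- The lower irredundance number `ir(G)`: the minimum cardinality of a
maximal irredundant set. -/
noncomputable def lowerIr (G : SimpleGraph V) : ℕ :=
  sInf {n | ∃ S : Set V, IsMaxIrredundant G S ∧ S.ncard = n}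

/-- A proper coloring of `G` with colors in `Fin k`, viewed as a function. -/
def IsProperColoring (G : SimpleGraph V) {k : ℕ} (C : V → Fin k) : Prop :=
  ∀ u v, G.Adj u v → C u ≠ C v

/-- `G` has an irredundance coloring with `k` colors: a proper coloring
together with a maximal irredundant set whose vertices get distinct colors. -/
def IrredColorable (G : SimpleGraph V) (k : ℕ) : Prop :=
  ∃ C : V → Fin k, IsProperColoring G C ∧
    ∃ R : Set V, IsMaxIrredundant G R ∧ Set.InjOn C R

/-- The irredundance chromatic number `χᵢ(G)`. -/
noncomputable def irChrom (G : SimpleGraph V) : ℕ := sInf {k | IrredColorable G k}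

/-- `S` is a dominating set of `G`. -/
def IsDomSet (G : SimpleGraph V) (S : Set V) : Prop :=
  ∀ v, v ∈ S ∨ ∃ u ∈ S, G.Adj u v

/-- The domination number `γ(G)`. -/
noncomputable def domNum (G : SimpleGraph V) : ℕ :=
  sInf {n | ∃ S : Set V, IsDomSet G S ∧ S.ncard = n}

/-- `G` has a gamma coloring with `k` colors: a proper coloring together with
a dominating set whose vertices get distinct colors. -/
def GammaColorable (G : SimpleGraph V) (k : ℕ) : Prop :=
  ∃ C : V → Fin k, IsProperColoring G C ∧
    ∃ D : Set V, IsDomSet G D ∧ Set.InjOn C D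

/-- The gamma chromatic number `χ_γ(G)`. -/
noncomputable def gammaChrom (G : SimpleGraph V) : ℕ := sInf {k | GammaColorable G k}

/-- A rainbow committee of the coloring `C`: a set containing exactly one
vertex of each color class. -/
def IsRainbowCommittee {k : ℕ} (C : V → Fin k) (T : Set V) : Prop :=
  ∀ i : Fin k, ∃! v, v ∈ T ∧ C v = i

/-- `C` is an irredundance compelling coloring of `G` (with all `k` colors
used): a proper coloring, onto its `k` colors, such that every rainbow
committee is an irredundant set. -/
def IsIRCColoring (G : SimpleGraph V) {k : ℕ} (C : V → Fin k) : Prop :=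
  IsProperColoring G C ∧ Function.Surjective C ∧
    ∀ T : Set V, IsRainbowCommittee C T → IsIrredundant G T

/-- `G` admits an irredundance compelling coloring. -/
def IRCColorable (G : SimpleGraph V) : Prop :=
  ∃ (k : ℕ) (C : V → Fin k), IsIRCColoring G C

/-- The irredundance compelling chromatic number `χ_irc(G)`: the maximum
number of colors among all irredundance compelling colorings of `G`. -/
noncomputable def ircChrom (G : SimpleGraph V) : ℕ :=
  sSup {k | ∃ C : V → Fin k, IsIRCColoring G C}

/-- `G` has a dominator coloring with `k` colors: a proper coloring, onto its
`k` colors, in which every vertex dominates some color class. -/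
def DominatorColorable (G : SimpleGraph V) (k : ℕ) : Prop :=
  ∃ C : V → Fin k, IsProperColoring G C ∧ Function.Surjective C ∧
    ∀ v, ∃ i : Fin k, (∀ u, C u = i → G.Adj v u) ∨ {u | C u = i} = {v}

/-- The dominator chromatic number `χ_d(G)`. -/
noncomputable def domChrom (G : SimpleGraph V) : ℕ := sInf {k | DominatorColorable G k}

theorem mem_closedNbr {G : SimpleGraph V} {v x : V} :
    x ∈ closedNbr G v ↔ x = v ∨ G.Adj v x := Iff.rfl

theorem mem_pnSet {G : SimpleGraph V} {S : Set V} {v x : V} :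
    x ∈ pnSet G S v ↔ x ∈ closedNbr G v ∧ ∀ w ∈ S, w ≠ v → x ∉ closedNbr G w := by
  simp [pnSet]

theorem isDomSet_iff_forall_exists_mem_closedNbr {G : SimpleGraph V} {S : Set V} :
    IsDomSet G S ↔ ∀ x, ∃ u ∈ S, x ∈ closedNbr G u := by
  refine forall_congr' fun x => ?_
  simp only [mem_closedNbr, and_or_left, exists_or, exists_eq_right']

/-- A vertex of a dominating set without private neighbors can be removed. -/
theorem IsDomSet.diff_singleton {G : SimpleGraph V} {S : Set V} (hS : IsDomSet G S) {v : V}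
    (hv : ¬ (pnSet G S v).Nonempty) : IsDomSet G (S \ {v}) := by
  rw [isDomSet_iff_forall_exists_mem_closedNbr] at hS ⊢
  intro x
  by_contra! hx
  have hpriv : ∀ w ∈ S, w ≠ v → x ∉ closedNbr G w := fun w hw hwv => hx w ⟨hw, hwv⟩
  obtain ⟨u, hu, hxu⟩ := hS x
  obtain rfl : u = v := by_contra fun huv => hpriv u hu huv hxu
  exact hv ⟨x, mem_pnSet.2 ⟨hxu, hpriv⟩⟩

/-- No outside vertex can be added to a dominating set while keeping it irredundant. -/
theorem IsDomSet.not_isIrredundant_insert {G : SimpleGraph V} {S : Set V} (hS : IsDomSet G S)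
    {w : V} (hw : w ∉ S) : ¬ IsIrredundant G (insert w S) := by
  intro hirr
  obtain ⟨x, hx⟩ := hirr w (Set.mem_insert w S)
  obtain ⟨u, hu, hxu⟩ := isDomSet_iff_forall_exists_mem_closedNbr.1 hS x
  exact (mem_pnSet.1 hx).2 u (Set.mem_insert_of_mem w hu) (ne_of_mem_of_not_mem hu hw) hxu

/-- In a finite simple graph, every minimal dominating set is a
maximal irredundant set. -/
theorem minimal_dominating_is_maximal_irredundant
    {V : Type*} [Fintype V] (G : SimpleGraph V) (S : Set V)
    (hdom : IsDomSet G S)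
    (hmin : ∀ T ⊆ S, IsDomSet G T → T = S) :
    IsMaxIrredundant G S := by
  refine ⟨fun v hv => ?_, fun w hw => hdom.not_isIrredundant_insert hw⟩
  by_contra hpn
  have hvS : v ∈ S \ {v} := by
    rwa [hmin _ Set.sdiff_subset (hdom.diff_singleton hpn)]
  exact hvS.2 rfl
end

section
/- If a finite simple graph G contains a vertex adjacent to every other vertex of G (a full degree vertex), then χ_i(G) = χ(G). -/
/-!  Common definitions: irredundance, irredundance coloring,
irredundance compelling coloring, and related graph parameters. -/

variable {V : Type*}

/-- A full degree vertex forms a maximal irredundant set on its own. -/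
lemma isMaxIrredundant_singleton {G : SimpleGraph V} {v : V} (hv : ∀ u, u ≠ v → G.Adj v u) :
    IsMaxIrredundant G {v} := by
  constructor
  · rintro u rfl
    exact ⟨u, by simp [pnSet, closedNbr]⟩
  · intro w hw hirr
    obtain ⟨x, -, hx⟩ := hirr w (Set.mem_insert w _)
    refine hx (Set.mem_biUnion (x := v) ⟨by simp, fun h => hw h.symm⟩ ?_)
    by_cases hxv : x = v
    · exact Or.inl hxv
    · exact Or.inr (hv x hxv)

/-- With a full degree vertex, irredundance colorings exist for exactly the numbers of colors
for which proper colorings exist. -/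
lemma irredColorable_iff_colorable {G : SimpleGraph V} {v : V} (hv : ∀ u, u ≠ v → G.Adj v u)
    (k : ℕ) : IrredColorable G k ↔ G.Colorable k := by
  constructor
  · rintro ⟨C, hC, -⟩
    exact ⟨SimpleGraph.Coloring.mk C fun {a b} hab => hC a b hab⟩
  · rintro ⟨C⟩
    exact ⟨C, fun _ _ hab => C.valid hab, {v}, isMaxIrredundant_singleton hv,
      Set.injOn_singleton _ _⟩

/-- If `G` has a full degree vertex then `χᵢ(G) = χ(G)`. -/
theorem irChrom_eq_chromaticNumber_of_full_degree_vertex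
    {V : Type*} [Fintype V] (G : SimpleGraph V)
    (h : ∃ v : V, ∀ u : V, u ≠ v → G.Adj v u) :
    (irChrom G : ℕ∞) = G.chromaticNumber := by
  obtain ⟨v, hv⟩ := h
  rw [G.colorable_of_fintype.chromaticNumber_eq_sInf, irChrom]
  simp only [irredColorable_iff_colorable hv]
end

section
/- For any finite simple graph G, max{χ(G), ir(G)} ≤ χ_i(G) ≤ χ(G) + ir(G) − 1. -/
/-!  Common definitions: irredundance, irredundance coloring,
irredundance compelling coloring, and related graph parameters. -/

variable {V : Type*}

theorem IsMaxIrredundant.of_maximal {G : SimpleGraph V} {S : Set V}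
    (hS : Maximal (IsIrredundant G) S) : IsMaxIrredundant G S :=
  ⟨hS.prop, fun _ hw h => hw (hS.le_of_ge h (Set.subset_insert _ _) (Set.mem_insert _ _))⟩

theorem exists_isMaxIrredundant [Finite V] (G : SimpleGraph V) :
    ∃ S : Set V, IsMaxIrredundant G S := by
  have hempty : IsIrredundant G (∅ : Set V) := fun v hv => absurd hv (Set.notMem_empty v)
  obtain ⟨S, hS⟩ := (Set.toFinite {S : Set V | IsIrredundant G S}).exists_maximal ⟨∅, hempty⟩
  exact ⟨S, .of_maximal hS⟩

theorem isIrredundant_singleton (G : SimpleGraph V) (w : V) : IsIrredundant G {w} := by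
  rintro v rfl
  exact ⟨v, by simp [pnSet, closedNbr]⟩

theorem IsMaxIrredundant.nonempty [Nonempty V] {G : SimpleGraph V} {S : Set V}
    (hS : IsMaxIrredundant G S) : S.Nonempty := by
  rw [Set.nonempty_iff_ne_empty]
  rintro rfl
  obtain ⟨w⟩ := ‹Nonempty V›
  exact hS.2 w (Set.notMem_empty w) (by simpa using isIrredundant_singleton G w)

/-- The colors of an irredundance coloring may come from any finite type. -/
theorem IrredColorable.of_coloring {α : Type*} [Fintype α] {G : SimpleGraph V}
    (C : G.Coloring α) {R : Set V} (hR : IsMaxIrredundant G R) (hC : Set.InjOn C R) :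
    IrredColorable G (Fintype.card α) :=
  ⟨fun v => Fintype.equivFin α (C v),
    fun _ _ huv h => C.valid huv ((Fintype.equivFin α).injective h),
    R, hR, fun _ hu _ hv h => hC hu hv ((Fintype.equivFin α).injective h)⟩

theorem irredColorable_card [Fintype V] (G : SimpleGraph V) :
    IrredColorable G (Fintype.card V) := by
  obtain ⟨R, hR⟩ := exists_isMaxIrredundant G
  exact .of_coloring G.selfColoring hR fun _ _ _ _ h => h

theorem exists_isMaxIrredundant_ncard_eq_lowerIr [Finite V] (G : SimpleGraph V) :
    ∃ S : Set V, IsMaxIrredundant G S ∧ S.ncard = lowerIr G :=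
  Nat.sInf_mem (s := {n | ∃ S : Set V, IsMaxIrredundant G S ∧ S.ncard = n})
    ((exists_isMaxIrredundant G).imp' Set.ncard fun S hS => ⟨S, hS, rfl⟩)

theorem irredColorable_irChrom [Fintype V] (G : SimpleGraph V) : IrredColorable G (irChrom G) :=
  Nat.sInf_mem (s := {k | IrredColorable G k}) ⟨_, irredColorable_card G⟩

theorem IrredColorable.colorable {G : SimpleGraph V} {k : ℕ} (h : IrredColorable G k) :
    G.Colorable k := by
  obtain ⟨C, hC, -⟩ := h
  exact ⟨SimpleGraph.Coloring.mk C fun {u v} => hC u v⟩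

theorem IrredColorable.lowerIr_le {G : SimpleGraph V} {k : ℕ} (h : IrredColorable G k) :
    lowerIr G ≤ k := by
  obtain ⟨C, -, R, hR, hinj⟩ := h
  calc lowerIr G ≤ R.ncard := Nat.sInf_le ⟨R, hR, rfl⟩
    _ = (C '' R).ncard := hinj.ncard_image.symm
    _ ≤ k := by simpa using Set.ncard_le_card (C '' R)

/-- Giving each vertex of a maximal irredundant set except one its own new color turns
a proper coloring into an irredundance coloring. -/
theorem SimpleGraph.Colorable.irredColorable [Finite V] [Nonempty V] {G : SimpleGraph V} {n : ℕ}
    (h : G.Colorable n) {R : Set V} (hR : IsMaxIrredundant G R) :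
    IrredColorable G (n + (R.ncard - 1)) := by
  classical
  obtain ⟨c⟩ := h
  obtain ⟨r, hr⟩ := hR.nonempty
  have : Fintype ↥(R \ {r}) := Fintype.ofFinite _
  let C : G.Coloring (Fin n ⊕ ↥(R \ {r})) :=
    SimpleGraph.Coloring.mk
      (fun v => if hv : v ∈ R \ {r} then Sum.inr ⟨v, hv⟩ else Sum.inl (c v)) <| by
      intro u v huv
      have hc := c.valid huv
      have hne := huv.ne
      split_ifs <;> simp_all
  have hC : ∀ v, C v = if hv : v ∈ R \ {r} then Sum.inr ⟨v, hv⟩ else Sum.inl (c v) := fun _ => rfl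
  have hinj : Set.InjOn C R := by
    intro u hu v hv huv
    rw [hC, hC] at huv
    split_ifs at huv <;> simp_all
  have hcard : Fintype.card (Fin n ⊕ ↥(R \ {r})) = n + (R.ncard - 1) := by
    rw [Fintype.card_sum, Fintype.card_fin, ← Nat.card_eq_fintype_card, Nat.card_coe_set_eq,
      Set.ncard_sdiff_singleton_of_mem hr]
  exact hcard ▸ .of_coloring C hR hinj

/-- `max {χ(G), ir(G)} ≤ χᵢ(G) ≤ χ(G) + ir(G) − 1`. -/
theorem irChrom_bounds {V : Type*} [Fintype V] (G : SimpleGraph V) :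
    max G.chromaticNumber (lowerIr G : ℕ∞) ≤ (irChrom G : ℕ∞) ∧
      (irChrom G : ℕ∞) ≤ G.chromaticNumber + (lowerIr G : ℕ∞) - 1 := by
  have hi := irredColorable_irChrom G
  refine ⟨max_le hi.colorable.chromaticNumber_le (by exact_mod_cast hi.lowerIr_le), ?_⟩
  rcases isEmpty_or_nonempty V with hV | hV
  · have h0 : irChrom G ≤ 0 := Nat.sInf_le (by simpa using irredColorable_card G)
    simp [Nat.le_zero.mp h0]
  · obtain ⟨R, hR, hcard⟩ := exists_isMaxIrredundant_ncard_eq_lowerIr G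
    obtain ⟨n, hn⟩ := ENat.ne_top_iff_exists.mp
      (SimpleGraph.chromaticNumber_ne_top_iff_exists.mpr ⟨_, hi.colorable⟩)
    have hcol : G.Colorable n := SimpleGraph.chromaticNumber_le_iff_colorable.mp hn.ge
    have hle : irChrom G ≤ n + (R.ncard - 1) := Nat.sInf_le (hcol.irredColorable hR)
    have hpos : 0 < R.ncard := hR.nonempty.ncard_pos
    rw [← hn, ← hcard]
    have : irChrom G ≤ n + R.ncard - 1 := by omega
    exact_mod_cast this
end

section
/- For all natural numbers n and k with k ≥ 2 and n ≥ 2k, there exists a finite simple graph G of order n such that χ(G) = ir(G) = χ_i(G) = k. -/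
/-!  Common definitions: irredundance, irredundance coloring,
irredundance compelling coloring, and related graph parameters. -/

variable {V : Type*}

/-- The complete graph on the vertices below `k`, with every vertex `v ≥ k` attached as a
pendant vertex to `v % k`. -/
def pendantClique (n k : ℕ) : SimpleGraph (Fin n) where
  Adj u v := u ≠ v ∧ ((u.val < k ∧ v.val < k) ∨
    ((u.val < k ∨ v.val < k) ∧ u.val % k = v.val % k))
  symm := ⟨fun u v h => by grind⟩
  loopless := ⟨fun u h => h.1 rfl⟩

theorem mem_pnSet_iff (G : SimpleGraph V) (S : Set V) (v x : V) :
    x ∈ pnSet G S v ↔ x ∈ closedNbr G v ∧ ∀ w ∈ S, w ≠ v → x ∉ closedNbr G w := by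
  simp [pnSet]

namespace pendantClique

variable {n k : ℕ}

theorem mem_closedNbr_of_lt {v x : Fin n} (hv : v.val < k) :
    x ∈ closedNbr (pendantClique n k) v ↔ x.val < k ∨ x.val % k = v.val := by
  have := Nat.mod_eq_of_lt hv
  simp only [closedNbr, pendantClique, Set.mem_insert_iff, SimpleGraph.mem_neighborSet]
  grind

theorem mem_closedNbr_of_le (hk : 0 < k) {v x : Fin n} (hv : k ≤ v.val) :
    x ∈ closedNbr (pendantClique n k) v ↔ x = v ∨ x.val = v.val % k := by
  have h1 := Nat.mod_lt v.val hk
  have h2 : x.val < k → x.val % k = x.val := Nat.mod_eq_of_lt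
  simp only [closedNbr, pendantClique, Set.mem_insert_iff, SimpleGraph.mem_neighborSet]
  grind

theorem isMaxIrredundant_clique (hk : 0 < k) (hn : 2 * k ≤ n) :
    IsMaxIrredundant (pendantClique n k) {v | v.val < k} := by
  refine ⟨fun v (hv : v.val < k) => ?_, fun w (hw : ¬ w.val < k) h => ?_⟩
  · refine ⟨⟨v.val + k, by omega⟩, (mem_pnSet_iff _ _ _ _).2 ⟨?_, ?_⟩⟩
    · simp [mem_closedNbr_of_lt hv, Nat.mod_eq_of_lt hv]
    · intro w (hw : w.val < k) hne
      simp only [mem_closedNbr_of_lt hw, Nat.add_mod_right, Nat.mod_eq_of_lt hv]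
      omega
  · obtain ⟨x, hx⟩ := h w (Set.mem_insert _ _)
    rw [mem_pnSet_iff, mem_closedNbr_of_le hk (not_lt.1 hw)] at hx
    have hlt := Nat.mod_lt w.val hk
    refine hx.2 ⟨w.val % k, by omega⟩ (Or.inr hlt) ?_ ?_
    · intro h
      exact hw (by rw [← h]; exact hlt)
    · rw [mem_closedNbr_of_lt hlt]
      rcases hx.1 with rfl | h
      · exact Or.inr rfl
      · exact Or.inl (h ▸ hlt)

/-- The pendant neighbor `i + k` of a clique vertex `i` lying in an irredundant set is
private for `i`. -/
theorem pendant_mem_pnSet (hk : 0 < k) {S : Set (Fin n)}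
    (hS : IsIrredundant (pendantClique n k) S) {v p : Fin n} (hvS : v ∈ S)
    (hv : v.val < k) (hp : p.val = v.val + k) :
    p ∈ pnSet (pendantClique n k) S v := by
  have hpk : p.val % k = v.val := by rw [hp, Nat.add_mod_right, Nat.mod_eq_of_lt hv]
  rw [mem_pnSet_iff, mem_closedNbr_of_lt hv]
  refine ⟨Or.inr hpk, fun w hw hne hmem => ?_⟩
  rcases lt_or_ge w.val k with hwk | hwk
  · rw [mem_closedNbr_of_lt hwk] at hmem
    omega
  · rw [mem_closedNbr_of_le hk hwk] at hmem
    have := Nat.mod_lt w.val hk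
    obtain rfl : p = w := hmem.resolve_right (by omega)
    obtain ⟨x, hx⟩ := hS p hw
    rw [mem_pnSet_iff, mem_closedNbr_of_le hk hwk] at hx
    refine hx.2 v hvS hne.symm ((mem_closedNbr_of_lt hv).2 ?_)
    rcases hx.1 with rfl | h
    · exact Or.inr hpk
    · exact Or.inl (by omega)

theorem exists_mem_mod_eq (hk : 0 < k) (hn : 2 * k ≤ n) {S : Set (Fin n)}
    (hS : IsMaxIrredundant (pendantClique n k) S) {i : ℕ} (hi : i < k) :
    ∃ v ∈ S, v.val % k = i := by
  by_contra! hno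
  let p : Fin n := ⟨i + k, by omega⟩
  have hple : k ≤ p.val := Nat.le_add_left k i
  have hpk : p.val % k = i := by simp [p, Nat.mod_eq_of_lt hi]
  have hpS : p ∉ S := fun h => hno p h hpk
  refine hS.2 p hpS fun v hv => ?_
  rcases Set.mem_insert_iff.1 hv with rfl | hvS
  · refine ⟨p, (mem_pnSet_iff _ _ _ _).2 ⟨Set.mem_insert _ _, fun w hw hne hmem => ?_⟩⟩
    have hwS := (Set.mem_insert_iff.1 hw).resolve_left hne
    have hwi := hno w hwS
    rcases lt_or_ge w.val k with hwk | hwk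
    · rw [mem_closedNbr_of_lt hwk] at hmem
      rw [Nat.mod_eq_of_lt hwk] at hwi
      omega
    · rw [mem_closedNbr_of_le hk hwk] at hmem
      have := Nat.mod_lt w.val hk
      exact hne (hmem.resolve_right (by omega)).symm
  · have hvi := hno v hvS
    suffices h : ∃ x ∈ pnSet (pendantClique n k) S v, x ≠ p ∧ x.val ≠ i by
      obtain ⟨x, hx, hxp, hxi⟩ := h
      rw [mem_pnSet_iff] at hx
      refine ⟨x, (mem_pnSet_iff _ _ _ _).2 ⟨hx.1, fun w hw hne => ?_⟩⟩
      rcases Set.mem_insert_iff.1 hw with rfl | hwS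
      · rw [mem_closedNbr_of_le hk hple, hpk]
        tauto
      · exact hx.2 w hwS hne
    rcases lt_or_ge v.val k with hvk | hvk
    · rw [Nat.mod_eq_of_lt hvk] at hvi
      refine ⟨⟨v.val + k, by omega⟩, pendant_mem_pnSet hk hS.1 hvS hvk rfl, ?_, ?_⟩
      · intro h
        have := congrArg Fin.val h
        simp only [p] at this
        omega
      · simp only
        omega
    · obtain ⟨x, hx⟩ := hS.1 v hvS
      have hxv := ((mem_pnSet_iff _ _ _ _).1 hx).1
      rw [mem_closedNbr_of_le hk hvk] at hxv
      refine ⟨x, hx, ?_, ?_⟩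
      · rintro rfl
        have := Nat.mod_lt v.val hk
        rcases hxv with rfl | h
        · exact hvi hpk
        · omega
      · rcases hxv with rfl | h <;> omega

theorem le_ncard_of_isMaxIrredundant (hk : 0 < k) (hn : 2 * k ≤ n) {S : Set (Fin n)}
    (hS : IsMaxIrredundant (pendantClique n k) S) : k ≤ S.ncard := by
  have hsub : (Finset.range k : Set ℕ) ⊆ (fun v : Fin n => v.val % k) '' S := by
    intro i hi
    exact exists_mem_mod_eq hk hn hS (by simpa using hi)
  calc k = (Finset.range k : Set ℕ).ncard := by simp
    _ ≤ ((fun v : Fin n => v.val % k) '' S).ncard := Set.ncard_le_ncard hsub (Set.toFinite _)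
    _ ≤ S.ncard := Set.ncard_image_le (Set.toFinite _)

theorem ncard_clique (hn : k ≤ n) : {v : Fin n | v.val < k}.ncard = k := by
  have : {v : Fin n | v.val < k} = Set.range (Fin.castLE hn) := by
    ext v
    exact ⟨fun h => ⟨⟨v.val, h⟩, rfl⟩, by rintro ⟨i, rfl⟩; exact i.isLt⟩
  rw [this, ← Set.image_univ, Set.ncard_image_of_injective _ (Fin.castLE_injective hn),
    Set.ncard_univ, Nat.card_fin]

/-- The coloring giving each clique vertex its own color and a pendant vertex the color after
that of its neighbor. -/
def color (n : ℕ) (hk : 0 < k) (v : Fin n) : Fin k :=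
  if h : v.val < k then ⟨v.val, h⟩ else ⟨(v.val + 1) % k, Nat.mod_lt _ hk⟩

theorem isProperColoring_color (hk : 2 ≤ k) :
    IsProperColoring (pendantClique n k) (color n (by omega : 0 < k)) := by
  have key (w : ℕ) : (w + 1) % k ≠ w % k := by
    intro h
    have h1 : 1 ≡ 0 [MOD k] := Nat.ModEq.add_left_cancel' w h
    rw [Nat.ModEq, Nat.mod_eq_of_lt (by omega), Nat.zero_mod] at h1
    omega
  rintro u v ⟨hne, h⟩ heq
  have hval := congrArg Fin.val heq
  have hu := key u
  have hv := key v
  have hu' : u.val < k → u.val % k = u.val := Nat.mod_eq_of_lt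
  have hv' : v.val < k → v.val % k = v.val := Nat.mod_eq_of_lt
  simp only [color] at hval
  split_ifs at hval <;> grind

theorem injOn_color (hk : 0 < k) : Set.InjOn (color n hk) {v | v.val < k} := by
  intro u (hu : u.val < k) v (hv : v.val < k) h
  simpa [color, hu, hv, Fin.ext_iff] using h

theorem le_of_isProperColoring (hn : k ≤ n) {m : ℕ} {C : Fin n → Fin m}
    (hC : IsProperColoring (pendantClique n k) C) : k ≤ m := by
  have hinj : Function.Injective fun i : Fin k => C (Fin.castLE hn i) := by
    intro i j h
    by_contra hij
    exact hC _ _ ⟨fun h => hij (Fin.castLE_injective hn h), Or.inl ⟨i.isLt, j.isLt⟩⟩ h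
  simpa using Fintype.card_le_of_injective _ hinj

theorem chromaticNumber_eq (hk : 2 ≤ k) (hn : k ≤ n) :
    (pendantClique n k).chromaticNumber = (k : ℕ∞) := by
  refine le_antisymm ?_ ?_
  · exact SimpleGraph.Colorable.chromaticNumber_le
      ⟨SimpleGraph.Coloring.mk _ fun {u v} h => isProperColoring_color hk u v h⟩
  · refine SimpleGraph.le_chromaticNumber_iff_colorable.2 fun m ⟨C⟩ => ?_
    exact le_of_isProperColoring hn (C := C) fun _ _ h => C.valid h

theorem lowerIr_eq (hk : 0 < k) (hn : 2 * k ≤ n) : lowerIr (pendantClique n k) = k := by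
  have hmem : k ∈ {m | ∃ S, IsMaxIrredundant (pendantClique n k) S ∧ S.ncard = m} :=
    ⟨_, isMaxIrredundant_clique hk hn, ncard_clique (by omega)⟩
  refine le_antisymm (Nat.sInf_le hmem) (le_csInf ⟨k, hmem⟩ ?_)
  rintro _ ⟨S, hS, rfl⟩
  exact le_ncard_of_isMaxIrredundant hk hn hS

theorem irChrom_eq (hk : 2 ≤ k) (hn : 2 * k ≤ n) : irChrom (pendantClique n k) = k := by
  have hmem : IrredColorable (pendantClique n k) k :=
    ⟨_, isProperColoring_color hk, _, isMaxIrredundant_clique (by omega) hn, injOn_color _⟩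
  refine le_antisymm (Nat.sInf_le hmem) (le_csInf ⟨k, hmem⟩ ?_)
  rintro m ⟨C, hC, -⟩
  exact le_of_isProperColoring (by omega) hC

end pendantClique

/-- for `k ≥ 2` and `n ≥ 2k` there exists a graph of order `n`
with `χ(G) = ir(G) = χᵢ(G) = k`. -/
theorem exists_graph_chrom_eq_ir_eq_irChrom (n k : ℕ) (hk : 2 ≤ k) (hn : 2 * k ≤ n) :
    ∃ G : SimpleGraph (Fin n),
      G.chromaticNumber = (k : ℕ∞) ∧ lowerIr G = k ∧ irChrom G = k :=
  ⟨pendantClique n k, pendantClique.chromaticNumber_eq hk (by omega),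
    pendantClique.lowerIr_eq (by omega) hn, pendantClique.irChrom_eq hk hn⟩
end

section
/- No tree with at least two vertices admits an irredundance compelling coloring. -/
/-!  Common definitions: irredundance, irredundance coloring,
irredundance compelling coloring, and related graph parameters. -/

variable {V : Type*}

/-- Any two vertices of distinct colors lie in a common rainbow committee. -/
theorem exists_isRainbowCommittee_of_ne {k : ℕ} {C : V → Fin k}
    (hC : Function.Surjective C) {u v : V} (huv : C u ≠ C v) :
    ∃ T : Set V, IsRainbowCommittee C T ∧ u ∈ T ∧ v ∈ T := by
  classical
  obtain ⟨g, hg⟩ := hC.hasRightInverse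
  let f : Fin k → V := Function.update (Function.update g (C v) v) (C u) u
  have hf : ∀ i, C (f i) = i := by
    intro i
    by_cases hu : i = C u
    · subst hu; simp [f]
    · by_cases hv : i = C v
      · subst hv; simp [f, hu]
      · simp [f, hu, hv, hg i]
  refine ⟨Set.range f, fun i => ⟨f i, ⟨⟨i, rfl⟩, hf i⟩, ?_⟩, ⟨C u, by simp [f]⟩,
    ⟨C v, by simp [f, huv.symm]⟩⟩
  rintro _ ⟨⟨j, rfl⟩, hj⟩
  rw [hf] at hj
  rw [hj]

/-- If `N[v] ⊆ N[u]` with `u ≠ v`, no irredundant set contains both `u` and `v`. -/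
theorem not_isIrredundant_of_closedNbr_subset {G : SimpleGraph V} {S : Set V} {u v : V}
    (hu : u ∈ S) (hv : v ∈ S) (huv : u ≠ v) (hsub : closedNbr G v ⊆ closedNbr G u) :
    ¬ IsIrredundant G S := by
  intro h
  obtain ⟨x, hx, hx'⟩ := h v hv
  exact hx' (Set.mem_biUnion (⟨hu, huv⟩ : u ∈ S \ {v}) (hsub hx))

/-- no tree with at least two vertices is IRC-colorable. -/
theorem tree_not_IRCColorable {V : Type*} [Fintype V] (G : SimpleGraph V)
    (htree : G.IsTree) (hcard : 2 ≤ Fintype.card V) :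
    ¬ IRCColorable G := by
  classical
  rintro ⟨k, C, hproper, hsurj, hirr⟩
  have : Nontrivial V := Fintype.one_lt_card_iff_nontrivial.mp hcard
  obtain ⟨v, hv⟩ := htree.exists_vert_degree_one_of_nontrivial
  obtain ⟨u, huv, huniq⟩ := SimpleGraph.degree_eq_one_iff_existsUnique_adj.mp hv
  obtain ⟨T, hT, huT, hvT⟩ := exists_isRainbowCommittee_of_ne hsurj (hproper u v huv.symm)
  refine not_isIrredundant_of_closedNbr_subset huT hvT huv.ne' ?_ (hirr T hT)
  rintro x (rfl | hx)
  · exact Or.inr huv.symm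
  · exact Or.inl (huniq x hx)
end

section
/- There are infinitely many IRC-colorable graphs with vertex-connectivity 1; that is, for every natural number N there exists a connected finite simple graph G of order greater than N such that G has a cut vertex (vertex-connectivity 1) and G admits an irredundance compelling coloring. -/
/-!  Common definitions: irredundance, irredundance coloring,
irredundance compelling coloring, and related graph parameters. -/

variable {V : Type*}

/-- A proper 2-coloring of a graph in which every vertex has two distinct neighbors is
irredundance compelling. -/
lemma IsProperColoring.isIRCColoring_of_two_neighbors [Nonempty V] {G : SimpleGraph V}
    {C : V → Fin 2} (hC : IsProperColoring G C)
    (hdeg : ∀ v, ∃ x y, x ≠ y ∧ G.Adj v x ∧ G.Adj v y) : IsIRCColoring G C := by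
  refine ⟨hC, fun i => ?_, fun T hT v hv => ?_⟩
  · obtain ⟨v⟩ := ‹Nonempty V›
    obtain ⟨x, -, -, hx, -⟩ := hdeg v
    have h := hC v x hx
    by_cases hi : C v = i
    · exact ⟨v, hi⟩
    · exact ⟨x, by omega⟩
  · have hne : ∀ w ∈ T, w ≠ v → C w ≠ C v := fun w hw hwv h =>
      hwv ((hT (C v)).unique ⟨hw, h⟩ ⟨hv, rfl⟩)
    obtain ⟨w, ⟨hw, hwc⟩, hwu⟩ := hT (C v + 1)
    have huniq : ∀ u ∈ T, u ≠ v → u = w := fun u hu huv =>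
      hwu u ⟨hu, by have := hne u hu huv; omega⟩
    have hwv : C w ≠ C v := by omega
    by_cases hadj : G.Adj w v
    · obtain ⟨x, hxw, hvx⟩ : ∃ x, x ≠ w ∧ G.Adj v x := by
        obtain ⟨x, y, hxy, hx, hy⟩ := hdeg v
        by_cases h : x = w
        · exact ⟨y, fun h' => hxy (h.trans h'.symm), hy⟩
        · exact ⟨x, h, hx⟩
      refine ⟨x, Or.inr hvx, ?_⟩
      simp only [Set.mem_iUnion, not_exists]
      rintro u ⟨hu, huv⟩ hxu
      obtain rfl := huniq u hu huv
      rcases hxu with hxu | hxu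
      · exact hxw hxu
      · have h₁ := hC _ _ hvx
        have h₂ := hC _ _ hxu
        omega
    · refine ⟨v, Or.inl rfl, ?_⟩
      simp only [Set.mem_iUnion, not_exists]
      rintro u ⟨hu, huv⟩ hvu
      obtain rfl := huniq u hu huv
      rcases hvu with hvu | hvu
      · exact huv hvu.symm
      · exact hadj hvu

/-- The complete bipartite graphs with parts `{0, 1}`, `{3, 4}` and `{0, 2}`, `{5, 6, …}`,
glued at the vertex `0`. -/
def gluedBipartite (n : ℕ) : SimpleGraph (Fin n) :=
  SimpleGraph.fromRel fun u v =>
    u.val < 3 ∧ 3 ≤ v.val ∧ (u.val = 0 ∨ (u.val = 1 ↔ v.val < 5))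

lemma gluedBipartite_adj {n : ℕ} {u v : Fin n} : (gluedBipartite n).Adj u v ↔
    (u.val < 3 ∧ 3 ≤ v.val ∧ (u.val = 0 ∨ (u.val = 1 ↔ v.val < 5))) ∨
    (v.val < 3 ∧ 3 ≤ u.val ∧ (v.val = 0 ∨ (v.val = 1 ↔ u.val < 5))) := by
  rw [gluedBipartite, SimpleGraph.fromRel_adj, and_iff_right_iff_imp]
  rintro h rfl
  omega

lemma gluedBipartite_connected (m : ℕ) : (gluedBipartite (m + 7)).Connected := by
  rw [SimpleGraph.connected_iff_exists_forall_reachable]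
  have hright : ∀ v : Fin (m + 7), 3 ≤ v.val →
      (gluedBipartite (m + 7)).Reachable ⟨0, by omega⟩ v := fun v hv =>
    (gluedBipartite_adj.2 (Or.inl ⟨by simp, hv, Or.inl rfl⟩)).reachable
  refine ⟨⟨0, by omega⟩, fun v => ?_⟩
  rcases lt_or_ge v.val 3 with hv | hv
  · by_cases h0 : v.val = 0
    · rw [show v = ⟨0, by omega⟩ from Fin.ext h0]
    · by_cases h1 : v.val = 1
      · exact (hright ⟨3, by omega⟩ le_rfl).trans
          (gluedBipartite_adj.2 (Or.inr (by simp [h1]))).reachable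
      · exact (hright ⟨5, by omega⟩ (by simp)).trans
          (gluedBipartite_adj.2 (Or.inr (by simp [h1, hv]))).reachable
  · exact hright v hv

lemma gluedBipartite_induce_not_connected (m : ℕ) :
    ¬ ((gluedBipartite (m + 7)).induce {u | u ≠ ⟨0, by omega⟩}).Connected := by
  intro h
  have hside : ∀ x y : {u : Fin (m + 7) | u ≠ ⟨0, by omega⟩},
      ((gluedBipartite (m + 7)).induce {u | u ≠ ⟨0, by omega⟩}).Reachable x y →
      (x.1.val = 1 ∨ x.1.val = 3 ∨ x.1.val = 4) →
      (y.1.val = 1 ∨ y.1.val = 3 ∨ y.1.val = 4) := by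
    rintro x y ⟨p⟩
    induction p with
    | nil => exact id
    | @cons a b c hab p ih =>
      intro ha
      apply ih
      have hadj := gluedBipartite_adj.1 (SimpleGraph.induce_adj.1 hab)
      have hb : b.1.val ≠ 0 := fun hb => b.2 (Fin.ext hb)
      omega
  have := hside ⟨⟨1, by omega⟩, by simp⟩ ⟨⟨2, by omega⟩, by simp⟩ (h.preconnected _ _)
    (Or.inl rfl)
  simp at this

lemma gluedBipartite_two_neighbors (m : ℕ) (v : Fin (m + 7)) :
    ∃ x y, x ≠ y ∧ (gluedBipartite (m + 7)).Adj v x ∧ (gluedBipartite (m + 7)).Adj v y := by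
  simp only [gluedBipartite_adj]
  by_cases h3 : v.val < 3
  · by_cases h2 : v.val = 2
    · exact ⟨⟨5, by omega⟩, ⟨6, by omega⟩, by simp, by simp [h2], by simp [h2]⟩
    · refine ⟨⟨3, by omega⟩, ⟨4, by omega⟩, by simp, ?_, ?_⟩ <;> dsimp only <;> omega
  · by_cases h5 : v.val < 5
    · refine ⟨⟨0, by omega⟩, ⟨1, by omega⟩, by simp, ?_, ?_⟩ <;> dsimp only <;> omega
    · refine ⟨⟨0, by omega⟩, ⟨2, by omega⟩, by simp, ?_, ?_⟩ <;> dsimp only <;> omega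

lemma gluedBipartite_IRCColorable (m : ℕ) : IRCColorable (gluedBipartite (m + 7)) := by
  refine ⟨2, fun v => if v.val < 3 then 0 else 1,
    IsProperColoring.isIRCColoring_of_two_neighbors (fun u v h => ?_)
      (gluedBipartite_two_neighbors m)⟩
  rw [gluedBipartite_adj] at h
  split_ifs <;> omega

/-- there are infinitely many IRC-colorable connected graphs
with a cut vertex (vertex-connectivity 1). -/
theorem infinitely_many_IRCColorable_with_cut_vertex (N : ℕ) :
    ∃ (n : ℕ) (G : SimpleGraph (Fin n)), N < n ∧ G.Connected ∧
      (∃ v : Fin n, ¬ (G.induce {u : Fin n | u ≠ v}).Connected) ∧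
      IRCColorable G := by
  exact ⟨N + 7, gluedBipartite (N + 7), by omega, gluedBipartite_connected N,
    ⟨_, gluedBipartite_induce_not_connected N⟩, gluedBipartite_IRCColorable N⟩
end

section
/- For every odd natural number n ≥ 3, the cycle C_n does not admit an irredundance compelling coloring. -/
/-!  Common definitions: irredundance, irredundance coloring,
irredundance compelling coloring, and related graph parameters. -/

variable {V : Type*}

/-- The range of a section of a coloring is a rainbow committee. -/
lemma isRainbowCommittee_range {k : ℕ} {C : V → Fin k} {f : Fin k → V}
    (hf : ∀ i, C (f i) = i) : IsRainbowCommittee C (Set.range f) := by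
  intro i
  refine ⟨f i, ⟨⟨i, rfl⟩, hf i⟩, ?_⟩
  rintro _ ⟨⟨j, rfl⟩, hj⟩
  rw [← hj, hf j]

/-- In an irredundance compelling coloring, the two neighbors of a vertex of degree two receive
the same color. -/
lemma IsIRCColoring.eq_of_neighborSet_eq_pair {G : SimpleGraph V} {k : ℕ} {C : V → Fin k}
    (hC : IsIRCColoring G C) {a b c : V} (hb : G.neighborSet b = {a, c}) : C a = C c := by
  obtain ⟨hproper, hsurj, hirr⟩ := hC
  by_contra hac
  have hba : G.Adj b a := by
    rw [← SimpleGraph.mem_neighborSet, hb]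
    simp
  have hbc : G.Adj b c := by
    rw [← SimpleGraph.mem_neighborSet, hb]
    simp
  have hCba := hproper b a hba
  have hCbc := hproper b c hbc
  let f : Fin k → V := fun i =>
    if i = C a then a else if i = C b then b else if i = C c then c else Function.surjInv hsurj i
  have hf : ∀ i, C (f i) = i := by
    intro i
    dsimp only [f]
    split_ifs with h₁ h₂ h₃
    · exact h₁.symm
    · exact h₂.symm
    · exact h₃.symm
    · exact Function.surjInv_eq hsurj i
  have ha : a ∈ Set.range f := ⟨C a, by simp [f]⟩
  have hbf : b ∈ Set.range f := ⟨C b, by simp [f, hCba]⟩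
  have hc : c ∈ Set.range f := ⟨C c, by simp [f, Ne.symm hac, hCbc.symm]⟩
  obtain ⟨x, hx, hx'⟩ := hirr _ (isRainbowCommittee_range hf) b hbf
  apply hx'
  simp only [Set.mem_iUnion]
  rw [closedNbr, hb] at hx
  rcases hx with rfl | rfl | rfl
  · exact ⟨a, ⟨ha, hba.ne'⟩, Or.inr hba.symm⟩
  · exact ⟨x, ⟨ha, hba.ne'⟩, Or.inl rfl⟩
  · exact ⟨x, ⟨hc, hbc.ne'⟩, Or.inl rfl⟩

/-- odd cycles are not IRC-colorable. -/
theorem odd_cycle_not_IRCColorable (n : ℕ) (hn : 3 ≤ n) (hodd : Odd n) :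
    ¬ IRCColorable (SimpleGraph.cycleGraph n) := by
  rintro ⟨k, C, hC⟩
  obtain ⟨m, rfl⟩ : ∃ m, n = m + 2 := ⟨n - 2, by omega⟩
  obtain ⟨j, hj⟩ := hodd
  have hstep : ∀ v : Fin (m + 2), C (v + 2 • 1) = C v := by
    intro v
    have h := hC.eq_of_neighborSet_eq_pair
      (SimpleGraph.cycleGraph_neighborSet (n := m) (v := v + 1))
    rw [add_sub_cancel_right, add_assoc, ← two_nsmul] at h
    exact h.symm
  have hmul : ∀ i : ℕ, C (i • 2 • 1) = C 0 := by
    intro i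
    induction i with
    | zero => rw [zero_nsmul]
    | succ i ih => rw [succ_nsmul, hstep, ih]
  have hone : (j + 1) • 2 • (1 : Fin (m + 2)) = 1 := by
    have hcard : (m + 2) • (1 : Fin (m + 2)) = 0 := by
      simpa using card_nsmul_eq_zero (x := (1 : Fin (m + 2)))
    rw [← mul_nsmul', show (j + 1) * 2 = m + 2 + 1 by omega, succ_nsmul, hcard, zero_add]
  refine hC.1 1 0 ?_ (hone ▸ hmul (j + 1))
  rw [SimpleGraph.cycleGraph_adj]
  simp
end

section
/- Let G be a finite simple graph and let Q ⊆ V(G) be a clique of G. If there exists a vertex v ∈ Q such that pn[v,Q] = ∅, then G does not admit an irredundance compelling coloring. -/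
/-!  Common definitions: irredundance, irredundance coloring,
irredundance compelling coloring, and related graph parameters. -/

variable {V : Type*}

theorem pnSet_anti (G : SimpleGraph V) {S T : Set V} (h : S ⊆ T) (v : V) :
    pnSet G T v ⊆ pnSet G S v :=
  Set.sdiff_subset_sdiff_right (Set.biUnion_subset_biUnion_left (Set.sdiff_subset_sdiff_left h))

theorem IsProperColoring.injOn_of_isClique {G : SimpleGraph V} {k : ℕ} {C : V → Fin k}
    (hC : IsProperColoring G C) {Q : Set V} (hQ : G.IsClique Q) : Set.InjOn C Q :=
  fun u hu w hw h => by_contra fun hne => hC u w (hQ hu hw hne) h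

/-- A set of vertices with distinct colors extends to a rainbow committee. -/
theorem exists_isRainbowCommittee_superset {k : ℕ} {C : V → Fin k}
    (hC : Function.Surjective C) {Q : Set V} (hQ : Set.InjOn C Q) :
    ∃ T, Q ⊆ T ∧ IsRainbowCommittee C T := by
  obtain ⟨T, hQT, hT⟩ := hQ.bijOn_image.exists_extend (Set.subset_univ _)
    hC.range_eq.ge
  refine ⟨T, hQT, fun i => ?_⟩
  obtain ⟨u, hu, hui⟩ := hT.surjOn (Set.mem_univ i)
  exact ⟨u, ⟨hu, hui⟩, fun w hw => hT.injOn hw.1 hu (hw.2.trans hui.symm)⟩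

/-- if some vertex of a clique `Q` has empty private neighbor
set with respect to `Q`, then `G` is not IRC-colorable. -/
theorem not_IRCColorable_of_clique_vertex_no_private_neighbor
    {V : Type*} [Fintype V] (G : SimpleGraph V) (Q : Set V)
    (hQ : G.IsClique Q) (v : V) (hv : v ∈ Q) (hpn : pnSet G Q v = ∅) :
    ¬ IRCColorable G := by
  rintro ⟨k, C, hproper, hsurj, hirr⟩
  obtain ⟨T, hQT, hT⟩ := exists_isRainbowCommittee_superset hsurj (hproper.injOn_of_isClique hQ)
  have hne := (hirr T hT v (hQT hv)).mono (pnSet_anti G hQT v)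
  exact hne.ne_empty hpn
end

section
/- Let G be a finite simple graph such that χ_d(G) = γ(G). Then G admits an irredundance compelling coloring and χ_irc(G) ≥ γ(G). -/
/-!  Common definitions: irredundance, irredundance coloring,
irredundance compelling coloring, and related graph parameters. -/

variable {V : Type*}

/-- A coloring with pairwise distinct colors is a dominator coloring. -/
theorem dominatorColorable_card [Fintype V] (G : SimpleGraph V) :
    DominatorColorable G (Fintype.card V) := by
  refine ⟨Fintype.equivFin V, fun u v huv hC => ?_, (Fintype.equivFin V).surjective,
    fun v => ⟨Fintype.equivFin V v, Or.inr ?_⟩⟩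
  · exact huv.ne ((Fintype.equivFin V).injective hC)
  · ext u
    simp

theorem domNum_le_ncard {G : SimpleGraph V} {S : Set V} (hS : IsDomSet G S) :
    domNum G ≤ S.ncard :=
  Nat.sInf_le ⟨S, hS, rfl⟩

theorem IsRainbowCommittee.injOn {k : ℕ} {C : V → Fin k} {T : Set V}
    (hT : IsRainbowCommittee C T) : Set.InjOn C T := fun u hu _ hv huv =>
  (hT (C u)).unique ⟨hu, rfl⟩ ⟨hv, huv.symm⟩

theorem IsRainbowCommittee.ncard_le {k : ℕ} {C : V → Fin k} {T : Set V}
    (hT : IsRainbowCommittee C T) : T.ncard ≤ k := by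
  rw [← hT.injOn.ncard_image]
  simpa using Set.ncard_le_card (Set.image C T)

/-- Every rainbow committee of a dominator coloring is a dominating set. -/
theorem IsRainbowCommittee.isDomSet {G : SimpleGraph V} {k : ℕ} {C : V → Fin k} {T : Set V}
    (hT : IsRainbowCommittee C T)
    (hC : ∀ v, ∃ i : Fin k, (∀ u, C u = i → G.Adj v u) ∨ {u | C u = i} = {v}) :
    IsDomSet G T := by
  intro v
  obtain ⟨i, hi⟩ := hC v
  obtain ⟨u, ⟨huT, hui⟩, -⟩ := hT i
  rcases hi with hi | hi
  · exact Or.inr ⟨u, huT, (hi u hui).symm⟩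
  · have huv : u ∈ ({v} : Set V) := hi ▸ hui
    exact Or.inl (Set.mem_singleton_iff.mp huv ▸ huT)

/-- A dominating set stays dominating after removing a vertex without private neighbors. -/
theorem IsDomSet.sdiff_singleton {G : SimpleGraph V} {S : Set V} {v : V} (hS : IsDomSet G S)
    (hv : pnSet G S v = ∅) : IsDomSet G (S \ {v}) := by
  intro x
  have hx : x ∈ ⋃ w ∈ S \ {v}, closedNbr G w := by
    by_cases hxv : x ∈ closedNbr G v
    · exact Set.sdiff_eq_empty.mp hv hxv
    · have hne : ∀ w, x ∈ closedNbr G w → w ≠ v := fun w hw hwv => hxv (hwv ▸ hw)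
      obtain ⟨w, hwS, hw⟩ : ∃ w ∈ S, x ∈ closedNbr G w := by
        rcases hS x with hxS | ⟨u, huS, hux⟩
        · exact ⟨x, hxS, Or.inl rfl⟩
        · exact ⟨u, huS, Or.inr hux⟩
      exact Set.mem_biUnion (show w ∈ S \ {v} from ⟨hwS, hne w hw⟩) hw
  obtain ⟨w, hwS, rfl | hw⟩ := Set.mem_iUnion₂.mp hx
  · exact Or.inl hwS
  · exact Or.inr ⟨w, hwS, hw⟩

/-- A minimum dominating set is irredundant. -/
theorem IsDomSet.isIrredundant [Finite V] {G : SimpleGraph V} {S : Set V} (hS : IsDomSet G S)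
    (hcard : S.ncard ≤ domNum G) : IsIrredundant G S := by
  intro v hv
  by_contra hne
  have hle := domNum_le_ncard (hS.sdiff_singleton (Set.not_nonempty_iff_eq_empty.mp hne))
  have hlt := Set.ncard_sdiff_singleton_lt_of_mem hv
  omega

theorem IsIRCColoring.le_ircChrom [Fintype V] {G : SimpleGraph V} {k : ℕ} {C : V → Fin k}
    (hC : IsIRCColoring G C) : k ≤ ircChrom G := by
  refine le_csSup ⟨Fintype.card V, ?_⟩ ⟨C, hC⟩
  rintro m ⟨D, -, hD, -⟩
  simpa using Fintype.card_le_of_surjective D hD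

/-- if `χ_d(G) = γ(G)` then `G` is IRC-colorable and
`χ_irc(G) ≥ γ(G)`. -/
theorem IRCColorable_of_domChrom_eq_domNum
    {V : Type*} [Fintype V] (G : SimpleGraph V)
    (h : domChrom G = domNum G) :
    IRCColorable G ∧ domNum G ≤ ircChrom G := by
  obtain ⟨C, hproper, hsurj, hdom⟩ : DominatorColorable G (domChrom G) :=
    Nat.sInf_mem (s := {k | DominatorColorable G k}) ⟨_, dominatorColorable_card G⟩
  have hC : IsIRCColoring G C :=
    ⟨hproper, hsurj, fun T hT => (hT.isDomSet hdom).isIrredundant (h ▸ hT.ncard_le)⟩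
  exact ⟨⟨_, C, hC⟩, h ▸ hC.le_ircChrom⟩
end
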